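/- Fix α ∈ [0,1]. (1) If G₁ and G₂ are A_α-cospectral regular graphs and H is an arbitrary graph, then the R-vertex joins G₁⟨v⟩H and G₂⟨v⟩H are A_α-cospectral. (2) If H₁ and H₂ are A_α-cospectral graphs with equal A_α-coronals Γ_{A_α(H₁)}(x) = Γ_{A_α(H₂)}(x), and G is a regular graph, then G⟨v⟩H₁ and G⟨v⟩H₂ are A_α-cospectral. -/

import Mathlib

open Matrix Polynomial
open scoped Classical

noncomputable section

/-- `A_α(G) = α·D(G) + (1-α)·A(G)`, where `D(G)` is the diagonal degree matrix and
`A(G)` the adjacency matrix. -/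
def Aalpha {V : Type*} [Fintype V] (G : SimpleGraph V) (α : ℝ) : Matrix V V ℝ :=
  α • Matrix.diagonal (fun v => (G.degree v : ℝ)) + (1 - α) • G.adjMatrix ℝ

/-- The `M`-coronal `Γ_M(x) = 1ᵀ (xI − M)⁻¹ 1`, i.e. the sum of the entries of
`(xI − M)⁻¹`. -/
def coronal {n : Type*} [Fintype n] (M : Matrix n n ℝ) (x : ℝ) : ℝ :=
  ∑ i, ∑ j, (x • (1 : Matrix n n ℝ) - M)⁻¹ i j

/-- The `R`-vertex join `G₁⟨v⟩G₂`: take the `R`-graph `R(G₁)` (for each edge of `G₁` a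
new vertex joined to both of its endpoints) together with `G₂`, and join every original
vertex of `G₁` with every vertex of `G₂`. -/
def rVertexJoin {V₁ V₂ : Type*} (G₁ : SimpleGraph V₁) (G₂ : SimpleGraph V₂) :
    SimpleGraph (V₁ ⊕ (↥G₁.edgeSet ⊕ V₂)) :=
  SimpleGraph.fromRel fun a b =>
    match a, b with
    | Sum.inl v, Sum.inl w => G₁.Adj v w
    | Sum.inl v, Sum.inr (Sum.inl e) => v ∈ (e : Sym2 V₁)
    | Sum.inl _, Sum.inr (Sum.inr _) => True
    | Sum.inr (Sum.inr u), Sum.inr (Sum.inr w) => G₂.Adj u w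
    | _, _ => False

/-!
Order the vertices of `G⟨v⟩H` as `V(G)`, `E(G)`, `V(H)`. Taking the Schur complement of the last two
blocks of `x I - A_α(G⟨v⟩H)` expresses its determinant through the spectrum and the coronal of
`A_α(H)` and the characteristic polynomials of the matrices `b A_α(G) + d D(G) + c J`, with `J` the
all-ones matrix. The dependence on `H` is thus only through its `A_α`-spectrum and its coronal. If
`G` is `r`-regular, then `D(G) = r I` and the all-ones vector is an eigenvector of `A_α(G)` with
eigenvalue `r`, so the spectrum of `b A_α(G) + d D(G) + c J` is determined by `r` and that of
`A_α(G)`. Finally `r` is determined by the `A_α`-spectrum, since the number of edges can be read off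
from the trace `2 α |E(G)|` of `A_α(G)` or, for `α = 0`, from the trace `2 |E(G)|` of `A(G)²`.
-/

theorem eq_of_forall_eval_eq_of_eval_ne_zero {R : Type*} [CommRing R] [IsDomain R] [Infinite R]
    {f p q : R[X]} (hf : f ≠ 0) (h : ∀ x, f.eval x ≠ 0 → p.eval x = q.eval x) : p = q := by
  refine mul_left_cancel₀ hf (Polynomial.funext fun x => ?_)
  rw [eval_mul, eval_mul]
  by_cases hx : f.eval x = 0
  · rw [hx, zero_mul, zero_mul]
  · rw [h x hx]

section Determinants

variable {R m n o : Type*} [CommRing R] [Fintype m] [Fintype n] [Fintype o] [DecidableEq m]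
  [DecidableEq n] [DecidableEq o]

theorem det_add_vecMulVec {A : Matrix n n R} (hA : IsUnit A.det) (u v : n → R) :
    (A + vecMulVec u v).det = A.det * (1 + v ⬝ᵥ A⁻¹ *ᵥ u) := by
  rw [vecMulVec_eq Unit, det_add_mul _ _ hA, det_unique (1 + _), Matrix.mul_assoc,
    ← replicateCol_mulVec, Matrix.add_apply, one_apply_eq, replicateRow_mul_replicateCol_apply]

theorem det_fromBlocks_fromCols_fromRows (A : Matrix m m R) (B : Matrix m n R) (B' : Matrix m o R)
    (C : Matrix n m R) (C' : Matrix o m R) {D : Matrix n n R} {D' : Matrix o o R}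
    (hD : IsUnit D.det) (hD' : IsUnit D'.det) :
    (fromBlocks A (fromCols B B') (fromRows C C') (fromBlocks D 0 0 D')).det =
      D.det * D'.det * (A - (B * D⁻¹ * C + B' * D'⁻¹ * C')).det := by
  let _ := D.invertibleOfIsUnitDet hD
  let _ := D'.invertibleOfIsUnitDet hD'
  let _ := fromBlocksZero₂₁Invertible D 0 D'
  rw [det_fromBlocks₂₂, invOf_fromBlocks_zero₂₁_eq, det_fromBlocks_zero₂₁,
    fromCols_mul_fromBlocks, fromCols_mul_fromRows]
  simp only [invOf_eq_nonsing_inv, Matrix.mul_zero, Matrix.zero_mul, neg_zero, add_zero, zero_add]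

end Determinants

section Charpoly

variable {m n : Type*} [Fintype m] [Fintype n] [DecidableEq m] [DecidableEq n]

theorem card_eq_of_charpoly_eq {R : Type*} [CommRing R] [Nontrivial R] {M : Matrix m m R}
    {N : Matrix n n R} (h : M.charpoly = N.charpoly) : Fintype.card m = Fintype.card n := by
  simpa only [charpoly_natDegree_eq_dim] using congrArg natDegree h

theorem trace_pow_eq_sum_roots_charpoly {𝕜 : Type*} [RCLike 𝕜] {A : Matrix n n 𝕜}
    (hA : A.IsHermitian) (k : ℕ) : (A ^ k).trace = (A.charpoly.roots.map (· ^ k)).sum := by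
  rw [hA.roots_charpoly_eq_eigenvalues, Multiset.map_map]
  conv_lhs => rw [hA.spectral_theorem, ← map_pow, Unitary.conjStarAlgAut_apply, trace_mul_cycle,
    Unitary.coe_star_mul_self, one_mul, diagonal_pow, trace_diagonal]
  rfl

theorem eval_charpoly_smul_add_smul_one {K : Type*} [Field K] (M : Matrix n n K) {b : K}
    (hb : b ≠ 0) (e x : K) :
    (b • M + e • (1 : Matrix n n K)).charpoly.eval x =
      b ^ Fintype.card n * M.charpoly.eval ((x - e) / b) := by
  rw [eval_charpoly, eval_charpoly, ← det_smul]
  congr 1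
  simp only [← smul_one_eq_diagonal, scalar_apply, smul_sub, smul_smul, mul_div_cancel₀ _ hb,
    sub_smul]
  abel

theorem charpoly_smul_add_smul_one_congr {K : Type*} [Field K] [Infinite K] {M : Matrix m m K}
    {N : Matrix n n K} (h : M.charpoly = N.charpoly) (b e : K) :
    (b • M + e • (1 : Matrix m m K)).charpoly = (b • N + e • (1 : Matrix n n K)).charpoly := by
  have hcard := card_eq_of_charpoly_eq h
  by_cases hb : b = 0
  · simp only [hb, zero_smul, zero_add, smul_one_eq_diagonal, charpoly_diagonal,
      Finset.prod_const, Finset.card_univ, hcard]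
  · refine Polynomial.funext fun x => ?_
    rw [eval_charpoly_smul_add_smul_one M hb, eval_charpoly_smul_add_smul_one N hb, h, hcard]

end Charpoly

section Coronal

theorem allOnes_mul_mul_allOnes {R l m n o : Type*} [CommSemiring R] [Fintype m] [Fintype n]
    (M : Matrix m n R) :
    (vecMulVec 1 1 : Matrix l m R) * M * (vecMulVec 1 1 : Matrix n o R) =
      (1 ⬝ᵥ M *ᵥ 1) • vecMulVec 1 1 := by
  rw [Matrix.mul_assoc, mul_vecMulVec, vecMulVec_mul_vecMulVec, vecMulVec_smul]

variable {m n : Type*} [Fintype m] [Fintype n] [DecidableEq m] [DecidableEq n]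

theorem coronal_eq_dotProduct_inv_mulVec {n : Type*} [Fintype n] [inst : DecidableEq n]
    (M : Matrix n n ℝ) (x : ℝ) : coronal M x = 1 ⬝ᵥ (scalar n x - M)⁻¹ *ᵥ 1 := by
  -- `coronal` is defined with the classical decidable equality.
  obtain rfl : inst = fun i j => Classical.propDecidable (i = j) := Subsingleton.elim _ _
  rw [one_dotProduct, scalar_apply, ← smul_one_eq_diagonal]
  simp only [coronal, mulVec, dotProduct_one]

theorem coronal_of_mulVec_one {M : Matrix n n ℝ} {r x : ℝ} (hM : M *ᵥ 1 = r • 1)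
    (hx : M.charpoly.eval x ≠ 0) (hxr : x ≠ r) : coronal M x = Fintype.card n / (x - r) := by
  rw [eval_charpoly] at hx
  have hones : (scalar n x - M) *ᵥ 1 = (x - r) • 1 := by
    rw [sub_mulVec, hM, scalar_apply, ← smul_one_eq_diagonal, smul_mulVec, one_mulVec, sub_smul]
  have hinv : (scalar n x - M)⁻¹ *ᵥ 1 = (x - r)⁻¹ • 1 := by
    rw [eq_inv_smul_iff₀ (sub_ne_zero.2 hxr), ← mulVec_smul, ← hones, mulVec_mulVec,
      nonsing_inv_mul _ hx.isUnit, one_mulVec]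
  rw [coronal_eq_dotProduct_inv_mulVec, hinv, dotProduct_smul, one_dotProduct_one, smul_eq_mul,
    inv_mul_eq_div]

theorem eval_charpoly_add_smul_allOnes (M : Matrix n n ℝ) (c : ℝ) {x : ℝ}
    (hx : M.charpoly.eval x ≠ 0) :
    (M + c • vecMulVec 1 1).charpoly.eval x = M.charpoly.eval x * (1 - c * coronal M x) := by
  rw [eval_charpoly] at hx
  rw [eval_charpoly, eval_charpoly, ← sub_sub, sub_eq_add_neg _ (c • _), ← neg_smul,
    ← smul_vecMulVec, det_add_vecMulVec hx.isUnit, mulVec_smul, dotProduct_smul,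
    ← coronal_eq_dotProduct_inv_mulVec, smul_eq_mul, neg_mul, ← sub_eq_add_neg]

theorem smul_add_smul_one_mulVec_one {R : Type*} [CommSemiring R] {M : Matrix n n R} {r : R}
    (hM : M *ᵥ 1 = r • 1) (b e : R) :
    (b • M + e • (1 : Matrix n n R)) *ᵥ 1 = (b * r + e) • 1 := by
  rw [add_mulVec, smul_mulVec, smul_mulVec, hM, one_mulVec, smul_smul, add_smul]

theorem charpoly_add_smul_allOnes_congr {M : Matrix m m ℝ} {N : Matrix n n ℝ} {r : ℝ}
    (hM : M *ᵥ 1 = r • 1) (hN : N *ᵥ 1 = r • 1) (h : M.charpoly = N.charpoly) (c : ℝ) :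
    (M + c • vecMulVec 1 1).charpoly = (N + c • vecMulVec 1 1).charpoly := by
  refine eq_of_forall_eval_eq_of_eval_ne_zero
    (mul_ne_zero M.charpoly_monic.ne_zero (X_sub_C_ne_zero r)) fun x hx => ?_
  rw [eval_mul, eval_sub, eval_X, eval_C, mul_ne_zero_iff, sub_ne_zero] at hx
  obtain ⟨hxM, hxr⟩ := hx
  have hxN := h ▸ hxM
  rw [eval_charpoly_add_smul_allOnes M c hxM, eval_charpoly_add_smul_allOnes N c hxN,
    coronal_of_mulVec_one hM hxM hxr, coronal_of_mulVec_one hN hxN hxr, h,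
    card_eq_of_charpoly_eq h]

end Coronal

section EdgeIncidence

variable (R : Type*) {V : Type*} (G : SimpleGraph V)

theorem sum_edgeSet_eq_sum_sym2 {M : Type*} [AddCommMonoid M] [Fintype V] {G : SimpleGraph V}
    {f : Sym2 V → M} (hf : ∀ e ∉ G.edgeSet, f e = 0) : ∑ e : G.edgeSet, f e = ∑ e, f e := by
  rw [← Finset.sum_subset G.edgeFinset.subset_univ fun e _ he =>
    hf e (mt SimpleGraph.mem_edgeFinset.2 he)]
  exact (Finset.sum_subtype _ (fun e => SimpleGraph.mem_edgeFinset) f).symm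

variable [DecidableEq V]

/-- The vertex-edge incidence matrix of `G`. Unlike `SimpleGraph.incMatrix`, whose columns range
over all unordered pairs of vertices, its columns are indexed by the edges only, that is, by the
vertices which the `R`-graph adds to `G`. -/
def edgeIncMatrix [Zero R] [One R] : Matrix V G.edgeSet R :=
  (G.incMatrix R).submatrix id Subtype.val

theorem edgeIncMatrix_apply [Zero R] [One R] (v : V) (e : G.edgeSet) :
    edgeIncMatrix R G v e = if v ∈ (e : Sym2 V) then 1 else 0 := by
  simp only [edgeIncMatrix, submatrix_apply, id_eq, SimpleGraph.incMatrix_apply',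
    SimpleGraph.incidenceSet, Set.mem_sep_iff, e.2, true_and]

variable [Fintype V]

theorem edgeIncMatrix_mulVec_one [NonAssocSemiring R] :
    edgeIncMatrix R G *ᵥ 1 = fun v => (G.degree v : R) := by
  ext v
  simp only [mulVec, dotProduct_one]
  rw [← SimpleGraph.sum_incMatrix_apply]
  exact sum_edgeSet_eq_sum_sym2 (f := G.incMatrix R v) fun e he =>
    G.incMatrix_of_notMem_incidenceSet fun h => he h.1

theorem edgeIncMatrix_transpose_mulVec_one [NonAssocSemiring R] :
    (edgeIncMatrix R G)ᵀ *ᵥ 1 = 2 := by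
  ext e
  simp only [mulVec, dotProduct_one]
  exact G.sum_incMatrix_apply_of_mem_edgeSet e.2

theorem edgeIncMatrix_mul_transpose [Semiring R] :
    edgeIncMatrix R G * (edgeIncMatrix R G)ᵀ = G.degMatrix R + G.adjMatrix R := by
  have hsum : edgeIncMatrix R G * (edgeIncMatrix R G)ᵀ = G.incMatrix R * (G.incMatrix R)ᵀ := by
    ext v w
    exact sum_edgeSet_eq_sum_sym2 (f := fun e => G.incMatrix R v e * G.incMatrix R w e)
      fun e he => by rw [G.incMatrix_of_notMem_incidenceSet fun h => he h.1, zero_mul]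
  rw [hsum, SimpleGraph.incMatrix_mul_transpose]
  ext v w
  by_cases hvw : v = w <;> simp [SimpleGraph.degMatrix, hvw]

end EdgeIncidence

section Aalpha

variable {V W : Type*} [Fintype V] [Fintype W]

theorem adjMatrix_mulVec_one (R : Type*) [NonAssocSemiring R] (G : SimpleGraph V) :
    G.adjMatrix R *ᵥ 1 = fun v => (G.degree v : R) := by
  ext v
  simp

theorem Aalpha_zero (G : SimpleGraph V) : Aalpha G 0 = G.adjMatrix ℝ := by
  rw [Aalpha, zero_smul, sub_zero, one_smul, zero_add]

theorem Aalpha_eq_degMatrix_add_adjMatrix [DecidableEq V] (G : SimpleGraph V) (α : ℝ) :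
    Aalpha G α = α • G.degMatrix ℝ + (1 - α) • G.adjMatrix ℝ := by
  simp only [Aalpha, SimpleGraph.degMatrix]
  congr!

theorem Aalpha_mulVec_one (G : SimpleGraph V) (α : ℝ) :
    Aalpha G α *ᵥ 1 = fun v => (G.degree v : ℝ) := by
  ext v
  rw [Aalpha_eq_degMatrix_add_adjMatrix, add_mulVec, smul_mulVec, smul_mulVec,
    adjMatrix_mulVec_one]
  simp only [Pi.add_apply, Pi.smul_apply, SimpleGraph.degMatrix_mulVec_apply, Pi.one_apply,
    smul_eq_mul]
  ring

theorem Aalpha_mulVec_one_of_isRegularOfDegree {G : SimpleGraph V} {r : ℕ}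
    (hG : G.IsRegularOfDegree r) (α : ℝ) : Aalpha G α *ᵥ 1 = (r : ℝ) • 1 := by
  ext v
  simp only [Aalpha_mulVec_one, hG v, Pi.smul_apply, Pi.one_apply, smul_eq_mul, mul_one]

theorem two_mul_card_edgeSet_of_isRegularOfDegree {G : SimpleGraph V} {r : ℕ}
    (hG : G.IsRegularOfDegree r) : 2 * Fintype.card G.edgeSet = Fintype.card V * r := by
  rw [← SimpleGraph.edgeFinset_card, ← G.sum_degrees_eq_twice_card_edges]
  simp only [hG _, Finset.sum_const, Finset.card_univ, smul_eq_mul]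

theorem trace_Aalpha (G : SimpleGraph V) (α : ℝ) :
    (Aalpha G α).trace = α * (2 * Fintype.card G.edgeSet) := by
  rw [Aalpha, trace_add, trace_smul, trace_smul, SimpleGraph.trace_adjMatrix, trace_diagonal,
    smul_zero, add_zero, smul_eq_mul, ← SimpleGraph.edgeFinset_card]
  exact_mod_cast congrArg (fun s : ℕ => α * s) G.sum_degrees_eq_twice_card_edges

variable [DecidableEq V] [DecidableEq W]

theorem degMatrix_of_isRegularOfDegree (R : Type*) [Semiring R] {G : SimpleGraph V} {r : ℕ}
    (hG : G.IsRegularOfDegree r) : G.degMatrix R = (r : R) • 1 := by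
  simp only [SimpleGraph.degMatrix, hG _, smul_one_eq_diagonal]

theorem trace_adjMatrix_sq (R : Type*) [Semiring R] (G : SimpleGraph V) :
    (G.adjMatrix R ^ 2).trace = 2 * Fintype.card G.edgeSet := by
  rw [pow_two, trace, ← SimpleGraph.edgeFinset_card]
  simp only [diag_apply, SimpleGraph.adjMatrix_mul_self_apply_self]
  exact_mod_cast congrArg (Nat.cast (R := R)) G.sum_degrees_eq_twice_card_edges

theorem card_edgeSet_eq_of_charpoly_Aalpha_eq {G : SimpleGraph V} {H : SimpleGraph W} {α : ℝ}
    (h : (Aalpha G α).charpoly = (Aalpha H α).charpoly) :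
    Fintype.card G.edgeSet = Fintype.card H.edgeSet := by
  suffices (2 * Fintype.card G.edgeSet : ℝ) = 2 * Fintype.card H.edgeSet by
    exact_mod_cast mul_left_cancel₀ two_ne_zero this
  by_cases hα : α = 0
  · rw [hα, Aalpha_zero, Aalpha_zero] at h
    rw [← trace_adjMatrix_sq, ← trace_adjMatrix_sq,
      trace_pow_eq_sum_roots_charpoly (G.isHermitian_adjMatrix ℝ), h,
      trace_pow_eq_sum_roots_charpoly (H.isHermitian_adjMatrix ℝ)]
  · refine mul_left_cancel₀ hα ?_
    rw [← trace_Aalpha, ← trace_Aalpha, trace_eq_neg_charpoly_nextCoeff, h,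
      trace_eq_neg_charpoly_nextCoeff]

theorem isRegularOfDegree_of_charpoly_Aalpha_eq {G : SimpleGraph V} {H : SimpleGraph W} {α : ℝ}
    {r s : ℕ} (hG : G.IsRegularOfDegree r) (hH : H.IsRegularOfDegree s)
    (h : (Aalpha G α).charpoly = (Aalpha H α).charpoly) : H.IsRegularOfDegree r := by
  intro v
  have : Nonempty W := ⟨v⟩
  have hcard : Fintype.card W * s = Fintype.card W * r := by
    rw [← two_mul_card_edgeSet_of_isRegularOfDegree hH, ← card_edgeSet_eq_of_charpoly_Aalpha_eq h,
      two_mul_card_edgeSet_of_isRegularOfDegree hG, card_eq_of_charpoly_eq h]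
  rw [hH v, Nat.eq_of_mul_eq_mul_left Fintype.card_pos hcard]

end Aalpha

section RVertexJoin

variable {V W : Type*} (G : SimpleGraph V) (H : SimpleGraph W)

theorem adjMatrix_rVertexJoin [DecidableEq V] (R : Type*) [MulZeroOneClass R] :
    (rVertexJoin G H).adjMatrix R =
      fromBlocks (G.adjMatrix R) (fromCols (edgeIncMatrix R G) (vecMulVec 1 1))
        (fromRows (edgeIncMatrix R G)ᵀ (vecMulVec 1 1)) (fromBlocks 0 0 0 (H.adjMatrix R)) := by
  ext (v | e | w) (v' | e' | w') <;> rw [SimpleGraph.adjMatrix_apply] <;>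
    simp [rVertexJoin, edgeIncMatrix_apply, SimpleGraph.adjMatrix_apply, SimpleGraph.adj_comm,
      and_iff_right_of_imp SimpleGraph.Adj.ne]

variable [Fintype V] [Fintype W]

theorem degree_rVertexJoin (R : Type*) [CommSemiring R] :
    (fun x => ((rVertexJoin G H).degree x : R)) =
      Sum.elim (fun v => 2 * (G.degree v : R) + Fintype.card W)
        (Sum.elim (fun _ => 2) fun w => (H.degree w : R) + Fintype.card V) := by
  rw [← adjMatrix_mulVec_one, adjMatrix_rVertexJoin, fromBlocks_mulVec]
  simp only [fromCols_mulVec, fromRows_mulVec, fromBlocks_mulVec, Pi.one_comp, vecMulVec_mulVec,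
    one_dotProduct_one, zero_mulVec, zero_add, adjMatrix_mulVec_one, edgeIncMatrix_mulVec_one,
    edgeIncMatrix_transpose_mulVec_one]
  ext (v | e | w)
  · simp [two_mul, add_assoc]
  · simp
  · simp [add_comm]

variable [DecidableEq V] [DecidableEq W]

theorem degMatrix_rVertexJoin (R : Type*) [CommSemiring R] :
    (rVertexJoin G H).degMatrix R =
      fromBlocks ((2 : R) • G.degMatrix R + (Fintype.card W : R) • 1) 0 0
        (fromBlocks ((2 : R) • 1) 0 0 (H.degMatrix R + (Fintype.card V : R) • 1)) := by
  simp only [SimpleGraph.degMatrix, degree_rVertexJoin, smul_one_eq_diagonal,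
    ← fromBlocks_diagonal, diagonal_add, ← diagonal_smul, Pi.smul_def, smul_eq_mul]

theorem Aalpha_rVertexJoin (α : ℝ) :
    Aalpha (rVertexJoin G H) α =
      fromBlocks (Aalpha G α + α • G.degMatrix ℝ + (α * Fintype.card W) • 1)
        (fromCols ((1 - α) • edgeIncMatrix ℝ G) ((1 - α) • vecMulVec 1 1))
        (fromRows ((1 - α) • (edgeIncMatrix ℝ G)ᵀ) ((1 - α) • vecMulVec 1 1))
        (fromBlocks ((2 * α) • 1) 0 0 (Aalpha H α + (α * Fintype.card V) • 1)) := by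
  simp only [Aalpha_eq_degMatrix_add_adjMatrix, adjMatrix_rVertexJoin, degMatrix_rVertexJoin,
    fromBlocks_smul, fromBlocks_add, smul_zero, zero_add, add_zero]
  congr 1
  · module
  · ext i (j | j) <;> rfl
  · ext (i | i) j <;> rfl
  · congr 1 <;> module

theorem scalar_sub_Aalpha_rVertexJoin (α x : ℝ) :
    scalar _ x - Aalpha (rVertexJoin G H) α =
      fromBlocks (scalar V (x - α * Fintype.card W) - (Aalpha G α + α • G.degMatrix ℝ))
        (fromCols (-((1 - α) • edgeIncMatrix ℝ G)) (-((1 - α) • vecMulVec 1 1)))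
        (fromRows (-((1 - α) • (edgeIncMatrix ℝ G)ᵀ)) (-((1 - α) • vecMulVec 1 1)))
        (fromBlocks ((x - 2 * α) • 1) 0 0
          (scalar W (x - α * Fintype.card V) - Aalpha H α)) := by
  simp only [Aalpha_rVertexJoin, scalar_apply, ← smul_one_eq_diagonal, ← fromBlocks_one,
    fromBlocks_smul, sub_eq_add_neg, fromBlocks_neg, fromBlocks_add, fromCols_neg, fromRows_neg,
    smul_zero, neg_zero, zero_add]
  congr 1
  · module
  · congr 1 <;> module

theorem eval_charpoly_Aalpha_rVertexJoin {α x : ℝ} (hx : x ≠ 2 * α)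
    (hxH : (Aalpha H α).charpoly.eval (x - α * Fintype.card V) ≠ 0) :
    (Aalpha (rVertexJoin G H) α).charpoly.eval x =
      (x - 2 * α) ^ Fintype.card G.edgeSet *
        (Aalpha H α).charpoly.eval (x - α * Fintype.card V) *
        ((1 + (1 - α) / (x - 2 * α)) • Aalpha G α +
          (α + (1 - α) * (1 - 2 * α) / (x - 2 * α)) • G.degMatrix ℝ +
          ((1 - α) ^ 2 * coronal (Aalpha H α) (x - α * Fintype.card V)) •
            vecMulVec 1 1).charpoly.eval (x - α * Fintype.card W) := by
  rw [eval_charpoly] at hxH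
  have hy : x - 2 * α ≠ 0 := sub_ne_zero.2 hx
  have hdet : ((x - 2 * α) • (1 : Matrix G.edgeSet G.edgeSet ℝ)).det =
      (x - 2 * α) ^ Fintype.card G.edgeSet := by rw [det_smul, det_one, mul_one]
  have hdet' : IsUnit ((x - 2 * α) • (1 : Matrix G.edgeSet G.edgeSet ℝ)).det :=
    hdet ▸ (pow_ne_zero _ hy).isUnit
  have hinv : ((x - 2 * α) • (1 : Matrix G.edgeSet G.edgeSet ℝ))⁻¹ = (x - 2 * α)⁻¹ • 1 :=
    inv_eq_left_inv (by rw [smul_one_mul, smul_smul, inv_mul_cancel₀ hy, one_smul])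
  rw [eval_charpoly, scalar_sub_Aalpha_rVertexJoin,
    det_fromBlocks_fromCols_fromRows _ _ _ _ _ hdet' hxH.isUnit, hdet, hinv, eval_charpoly,
    eval_charpoly, coronal_eq_dotProduct_inv_mulVec]
  congr 2
  -- The edge block contributes `B * Bᵀ = D + A` to the Schur complement, and
  -- `(1 - α) • A = Aalpha G α - α • D`.
  simp only [Matrix.neg_mul, Matrix.mul_neg, Matrix.smul_mul, Matrix.mul_smul, Matrix.mul_one,
    edgeIncMatrix_mul_transpose, allOnes_mul_mul_allOnes, Aalpha_eq_degMatrix_add_adjMatrix]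
  match_scalars <;> field_simp <;> ring

end RVertexJoin

section Cospectrality

variable {V₁ V₂ W₁ W₂ : Type*} [Fintype V₁] [Fintype V₂] [Fintype W₁] [Fintype W₂]
  [DecidableEq V₁] [DecidableEq V₂] [DecidableEq W₁] [DecidableEq W₂]
  {G₁ : SimpleGraph V₁} {G₂ : SimpleGraph V₂} {H₁ : SimpleGraph W₁} {H₂ : SimpleGraph W₂} {α : ℝ}

theorem charpoly_Aalpha_rVertexJoin_congr
    (hG : ∀ b d c : ℝ,
      (b • Aalpha G₁ α + d • G₁.degMatrix ℝ + c • vecMulVec 1 1).charpoly =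
        (b • Aalpha G₂ α + d • G₂.degMatrix ℝ + c • vecMulVec 1 1).charpoly)
    (hH : (Aalpha H₁ α).charpoly = (Aalpha H₂ α).charpoly)
    (hcor : ∀ x, coronal (Aalpha H₁ α) x = coronal (Aalpha H₂ α) x) :
    (Aalpha (rVertexJoin G₁ H₁) α).charpoly = (Aalpha (rVertexJoin G₂ H₂) α).charpoly := by
  have hV : Fintype.card V₁ = Fintype.card V₂ := card_eq_of_charpoly_eq (hG 0 0 0)
  have hE : Fintype.card G₁.edgeSet = Fintype.card G₂.edgeSet :=
    card_edgeSet_eq_of_charpoly_Aalpha_eq <| by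
      simpa only [one_smul, zero_smul, add_zero] using hG 1 0 0
  have hshift : (Aalpha H₁ α).charpoly.comp (X - C (α * Fintype.card V₁)) ≠ 0 :=
    ((charpoly_monic _).comp_X_sub_C _).ne_zero
  refine eq_of_forall_eval_eq_of_eval_ne_zero
    (mul_ne_zero (X_sub_C_ne_zero (2 * α)) hshift) fun x hx => ?_
  simp only [eval_mul, eval_sub, eval_X, eval_C, eval_comp, mul_ne_zero_iff, sub_ne_zero] at hx
  obtain ⟨hxα, hx₁⟩ := hx
  have hx₂ : (Aalpha H₂ α).charpoly.eval (x - α * Fintype.card V₂) ≠ 0 := by rwa [← hH, ← hV]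
  rw [eval_charpoly_Aalpha_rVertexJoin G₁ H₁ hxα hx₁,
    eval_charpoly_Aalpha_rVertexJoin G₂ H₂ hxα hx₂, hG, hH, hcor, hV, hE, card_eq_of_charpoly_eq hH]

theorem charpoly_smul_Aalpha_add_smul_degMatrix_add_smul_allOnes_congr {r s : ℕ}
    (hG₁ : G₁.IsRegularOfDegree r) (hG₂ : G₂.IsRegularOfDegree s)
    (h : (Aalpha G₁ α).charpoly = (Aalpha G₂ α).charpoly) (b d c : ℝ) :
    (b • Aalpha G₁ α + d • G₁.degMatrix ℝ + c • vecMulVec 1 1).charpoly =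
      (b • Aalpha G₂ α + d • G₂.degMatrix ℝ + c • vecMulVec 1 1).charpoly := by
  have hG₂' : G₂.IsRegularOfDegree r := isRegularOfDegree_of_charpoly_Aalpha_eq hG₁ hG₂ h
  rw [degMatrix_of_isRegularOfDegree ℝ hG₁, degMatrix_of_isRegularOfDegree ℝ hG₂', smul_smul,
    smul_smul]
  exact charpoly_add_smul_allOnes_congr
    (smul_add_smul_one_mulVec_one (Aalpha_mulVec_one_of_isRegularOfDegree hG₁ α) b (d * r))
    (smul_add_smul_one_mulVec_one (Aalpha_mulVec_one_of_isRegularOfDegree hG₂' α) b (d * r))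
    (charpoly_smul_add_smul_one_congr h b (d * r)) c

end Cospectrality

theorem Aalpha_cospectral_rVertexJoin_general (α : ℝ) :
    (∀ {V₁ V₂ W : Type*} [Fintype V₁] [Fintype V₂] [Fintype W] [DecidableEq V₁] [DecidableEq V₂]
        [DecidableEq W] {r₁ r₂ : ℕ} {G₁ : SimpleGraph V₁} {G₂ : SimpleGraph V₂}
        (H : SimpleGraph W),
      G₁.IsRegularOfDegree r₁ → G₂.IsRegularOfDegree r₂ →
      (Aalpha G₁ α).charpoly = (Aalpha G₂ α).charpoly →
      (Aalpha (rVertexJoin G₁ H) α).charpoly = (Aalpha (rVertexJoin G₂ H) α).charpoly) ∧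
    (∀ {V W₁ W₂ : Type*} [Fintype V] [Fintype W₁] [Fintype W₂] [DecidableEq V] [DecidableEq W₁]
        [DecidableEq W₂] (G : SimpleGraph V) {H₁ : SimpleGraph W₁} {H₂ : SimpleGraph W₂},
      (Aalpha H₁ α).charpoly = (Aalpha H₂ α).charpoly →
      (∀ x : ℝ, coronal (Aalpha H₁ α) x = coronal (Aalpha H₂ α) x) →
      (Aalpha (rVertexJoin G H₁) α).charpoly = (Aalpha (rVertexJoin G H₂) α).charpoly) :=
  ⟨fun _ hG₁ hG₂ hG => charpoly_Aalpha_rVertexJoin_congr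
      (charpoly_smul_Aalpha_add_smul_degMatrix_add_smul_allOnes_congr hG₁ hG₂ hG) rfl
      fun _ => rfl,
    fun _ => charpoly_Aalpha_rVertexJoin_congr fun _ _ _ => rfl⟩

/-- Corollary: constructions of `A_α`-cospectral pairs from `R`-vertex joins.
(1) Joining two `A_α`-cospectral regular graphs with the same arbitrary graph `H` gives
`A_α`-cospectral graphs.  (2) Joining a regular graph `G` with two `A_α`-cospectral
graphs having equal `A_α`-coronals gives `A_α`-cospectral graphs. -/
theorem Aalpha_cospectral_rVertexJoin
    (α : ℝ) (hα : α ∈ Set.Icc (0 : ℝ) 1) :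
    (∀ (n₁ n₂ k r₁ r₂ : ℕ) (G₁ : SimpleGraph (Fin n₁)) (G₂ : SimpleGraph (Fin n₂))
        (H : SimpleGraph (Fin k)),
      G₁.IsRegularOfDegree r₁ → G₂.IsRegularOfDegree r₂ →
      (Aalpha G₁ α).charpoly = (Aalpha G₂ α).charpoly →
      (Aalpha (rVertexJoin G₁ H) α).charpoly =
        (Aalpha (rVertexJoin G₂ H) α).charpoly) ∧
    (∀ (n k₁ k₂ r : ℕ) (G : SimpleGraph (Fin n)) (H₁ : SimpleGraph (Fin k₁))
        (H₂ : SimpleGraph (Fin k₂)),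
      G.IsRegularOfDegree r →
      (Aalpha H₁ α).charpoly = (Aalpha H₂ α).charpoly →
      (∀ x : ℝ, coronal (Aalpha H₁ α) x = coronal (Aalpha H₂ α) x) →
      (Aalpha (rVertexJoin G H₁) α).charpoly =
        (Aalpha (rVertexJoin G H₂) α).charpoly) := by
  obtain ⟨hleft, hright⟩ := Aalpha_cospectral_rVertexJoin_general α
  exact ⟨fun _ _ _ _ _ _ _ H => hleft H, fun _ _ _ _ G _ _ _ => hright G⟩
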